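/- arXiv:1102.2127 — 3 statements merged into one kernel-verified Lean document; each statement's English description precedes it below -/
import Mathlib

section
/- Let G be an idempotent groupoid and n ≥ 3 such that ⟨x₁⋯xₙ⟩_L = ⟨x₁⋯xₙ⟩_R holds for all x₁,…,xₙ ∈ G. Then for every k with 1 ≤ k ≤ n−1 and all x, y ∈ G, one has x*y^(n−k) = ᵏx*y, i.e. the left-associated product of x followed by n−k copies of y equals the right-associated product of k copies of x followed by y. -/
/-- The left-associated product `((x * l₁) * l₂) * ⋯ * lₘ`. -/
def leftAssoc {G : Type*} (op : G → G → G) (x : G) (l : List G) : G :=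
  l.foldl op x

/-- The right-associated product `x * (l₁ * (l₂ * (⋯ * lₘ)))`. -/
def rightAssoc {G : Type*} (op : G → G → G) : G → List G → G
  | x, [] => x
  | x, y :: l => op x (rightAssoc op y l)

/-- `x * yᵐ`, the left-associated product of `x` followed by `m` copies of `y`. -/
def lpow {G : Type*} (op : G → G → G) (x y : G) (m : ℕ) : G :=
  leftAssoc op x (List.replicate m y)

/-- `ᵏx * y`, the right-associated product of `k` copies of `x` followed by `y`. -/
def rpow {G : Type*} (op : G → G → G) (x y : G) : ℕ → G
  | 0 => y
  | k + 1 => op x (rpow op x y k)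

/-! At the word `x, …, x, y, …, y` with `k` letters `x` and `n - k` letters `y`, the left-associated
product absorbs the copies of `x` into one, and the right-associated product absorbs the copies of
`y` into one. -/

section

variable {G : Type*} {op : G → G → G}

theorem leftAssoc_replicate_append {x : G} (hx : op x x = x) (a : ℕ) (l : List G) :
    leftAssoc op x (List.replicate a x ++ l) = leftAssoc op x l := by
  induction a with
  | zero => rfl
  | succ a ih =>
    calc leftAssoc op x (List.replicate (a + 1) x ++ l)
        = leftAssoc op (op x x) (List.replicate a x ++ l) := rfl
      _ = leftAssoc op x l := by rw [hx, ih]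

theorem rightAssoc_replicate_self {y : G} (hy : op y y = y) (b : ℕ) :
    rightAssoc op y (List.replicate b y) = y := by
  induction b with
  | zero => rfl
  | succ b ih => rw [List.replicate_succ, rightAssoc, ih, hy]

theorem rightAssoc_replicate_append_cons (x y : G) (a : ℕ) (l : List G) :
    rightAssoc op x (List.replicate a x ++ y :: l) = rpow op x (rightAssoc op y l) (a + 1) := by
  induction a with
  | zero => rfl
  | succ a ih => exact congrArg (op x) ih

theorem idempotent_leftAssoc_eq_rightAssoc_powers_general {n : ℕ}
    (h : ∀ (x : G) (l : List G), l.length = n - 1 → leftAssoc op x l = rightAssoc op x l)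
    {k : ℕ} (hk : 1 ≤ k) (hkn : k ≤ n - 1) {x y : G} (hx : op x x = x) (hy : op y y = y) :
    lpow op x y (n - k) = rpow op x y k := by
  obtain ⟨a, rfl⟩ : ∃ a, k = a + 1 := Nat.exists_eq_add_of_le' hk
  obtain ⟨b, hb⟩ : ∃ b, n - (a + 1) = b + 1 := Nat.exists_eq_add_of_le' (by omega)
  have hlength : (List.replicate a x ++ y :: List.replicate b y).length = n - 1 := by
    simp only [List.length_append, List.length_cons, List.length_replicate]
    omega
  calc lpow op x y (n - (a + 1))
      = leftAssoc op x (y :: List.replicate b y) := by rw [hb, lpow, List.replicate_succ]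
    _ = leftAssoc op x (List.replicate a x ++ y :: List.replicate b y) :=
        (leftAssoc_replicate_append hx a _).symm
    _ = rightAssoc op x (List.replicate a x ++ y :: List.replicate b y) := h x _ hlength
    _ = rpow op x (rightAssoc op y (List.replicate b y)) (a + 1) :=
        rightAssoc_replicate_append_cons x y a _
    _ = rpow op x y (a + 1) := by rw [rightAssoc_replicate_self hy]

end

/-- In an idempotent groupoid satisfying `⟨x₁⋯xₙ⟩_L = ⟨x₁⋯xₙ⟩_R` for some `n ≥ 3`,
one has `x * y^(n-k) = ᵏx * y` for all `1 ≤ k ≤ n - 1`. -/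
theorem idempotent_leftAssoc_eq_rightAssoc_powers
    {G : Type*} (op : G → G → G)
    (idem : ∀ x : G, op x x = x)
    (n : ℕ) (hn : 3 ≤ n)
    (h : ∀ (x : G) (l : List G), l.length = n - 1 →
      leftAssoc op x l = rightAssoc op x l) :
    ∀ k : ℕ, 1 ≤ k → k ≤ n - 1 →
      ∀ x y : G, lpow op x y (n - k) = rpow op x y k :=
  fun _ hk hkn x y =>
    idempotent_leftAssoc_eq_rightAssoc_powers_general h hk hkn (idem x) (idem y)
end

section
/- Let G be an idempotent groupoid and n ≥ 3 such that for all x₁,…,xₙ ∈ G the identity ⟨x₁⋯xₙ⟩_L = x₁*⟨x₂⋯xₙ⟩_L holds. Then for all x, y, z ∈ G one has (x*y^(n−2))*z = x*(y*z), and in particular x*y^(n−1) = x*y. -/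
/-! Apply the identity to the word `x y ⋯ y z` with `n - 2` letters `y`: the left side is
`(x * yⁿ⁻²) * z`, while on the right idempotence collapses `⟨y ⋯ y z⟩_L` to `y * z`. Taking `z = y`
gives the second claim. -/

section

variable {G : Type*} {op : G → G → G}

theorem leftAssoc_concat (x z : G) (l : List G) :
    leftAssoc op x (l ++ [z]) = op (leftAssoc op x l) z :=
  List.foldl_concat ..

theorem lpow_succ (x y : G) (m : ℕ) : lpow op x y (m + 1) = op (lpow op x y m) y := by
  rw [lpow, List.replicate_succ', leftAssoc_concat, lpow]

theorem lpow_self {y : G} (hy : op y y = y) (m : ℕ) : lpow op y y m = y := by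
  induction m with
  | zero => rfl
  | succ m ih => rw [lpow_succ, ih, hy]

theorem leftAssoc_replicate_concat_self {y : G} (hy : op y y = y) (m : ℕ) (z : G) :
    leftAssoc op y (List.replicate m y ++ [z]) = op y z := by
  rw [leftAssoc_concat, ← lpow, lpow_self hy]

end

/-- In an idempotent groupoid satisfying, for some `n ≥ 3`, the identity
`⟨x₁⋯xₙ⟩_L = x₁*⟨x₂⋯xₙ⟩_L`, one has `(x*y^(n-2))*z = x*(y*z)` and
`x*y^(n-1) = x*y`. -/
theorem idempotent_nulla_consequences
    {G : Type*} (op : G → G → G)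
    (idem : ∀ x : G, op x x = x)
    (n : ℕ) (hn : 3 ≤ n)
    (h : ∀ (x y : G) (l : List G), (y :: l).length = n - 1 →
      leftAssoc op x (y :: l) = op x (leftAssoc op y l)) :
    (∀ x y z : G, op (lpow op x y (n - 2)) z = op x (op y z)) ∧
    (∀ x y : G, lpow op x y (n - 1) = op x y) := by
  obtain ⟨k, rfl⟩ : ∃ k, n = k + 3 := ⟨n - 3, by omega⟩
  have lpow_op (x y z : G) : op (lpow op x y (k + 1)) z = op x (op y z) := calc
    op (lpow op x y (k + 1)) z = leftAssoc op x (y :: (List.replicate k y ++ [z])) :=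
      (leftAssoc_concat x z (List.replicate (k + 1) y)).symm
    _ = op x (leftAssoc op y (List.replicate k y ++ [z])) := h x y _ (by simp)
    _ = op x (op y z) := by rw [leftAssoc_replicate_concat_self (idem y)]
  refine ⟨lpow_op, fun x y => ?_⟩
  calc
    lpow op x y (k + 2) = op (lpow op x y (k + 1)) y := lpow_succ x y (k + 1)
    _ = op x (op y y) := lpow_op x y y
    _ = op x y := by rw [idem]
end

section
/- Let G be a groupoid satisfying the identity x*(y*(z*u)) = x*((y*z)*u) for all x, y, z, u ∈ G. Then for every n ≥ 2, the number of distinct n-ary functions Gⁿ → G induced by bracketings of size n is at most 2^(n−2); that is, s_G(n) ≤ 2^(n−2). -/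
/-- A bracketing: a full binary tree. Its leaves, read from left to right,
carry the variables of the bracketed product. -/
inductive Bracketing : Type
  | leaf : Bracketing
  | node : Bracketing → Bracketing → Bracketing

/-- The size of a bracketing: its number of leaves. -/
def Bracketing.size : Bracketing → ℕ
  | .leaf => 1
  | .node P Q => P.size + Q.size

/-- Evaluate a bracketing in a groupoid `(G, op)` on the variables
`f i, f (i+1), …` (assigned to the leaves from left to right). -/
def Bracketing.eval {G : Type*} (op : G → G → G) : Bracketing → (ℕ → G) → ℕ → G
  | .leaf, f, i => f i
  | .node P Q, f, i => op (P.eval op f i) (Q.eval op f (i + P.size))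

/-!
Unfolding a bracketing along its left spine writes it as `(⋯((x B₁) B₂) ⋯) Bₖ` with `x` a single
leaf. The identity says that associativity holds under a left multiplication, so the value of
`y Bⱼ` depends on `Bⱼ` only through its size. The induced function is therefore determined by the
sizes of the `Bⱼ`, which form a composition of `n - 1`, and there are `2 ^ (n - 2)` of those.
-/

namespace Bracketing

theorem size_pos : ∀ B : Bracketing, 0 < B.size
  | leaf => Nat.one_pos
  | node P _ => Nat.add_pos_left P.size_pos _

/-- The sizes of the right factors `B₁, …, Bₖ` met along the left spine of
`(⋯((x B₁) B₂) ⋯) Bₖ`, starting from the root: the list is `[Bₖ.size, …, B₁.size]`. -/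
def rightFactorSizes : Bracketing → List ℕ
  | leaf => []
  | node P Q => Q.size :: P.rightFactorSizes

theorem sum_rightFactorSizes_add_one (B : Bracketing) :
    B.rightFactorSizes.sum + 1 = B.size := by
  induction B with
  | leaf => rfl
  | node P Q ihP _ => simp only [rightFactorSizes, List.sum_cons, size]; omega

theorem pos_of_mem_rightFactorSizes {B : Bracketing} {k : ℕ} (hk : k ∈ B.rightFactorSizes) :
    0 < k := by
  induction B with
  | leaf => cases hk
  | node P Q ihP _ =>
    obtain rfl | hk := List.mem_cons.1 hk
    · exact Q.size_pos
    · exact ihP hk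

/-- The composition of `B.size - 1` formed by the sizes of the right factors along the left spine;
one leaf is lost because the spine ends in a single leaf. -/
def composition (B : Bracketing) : Composition (B.size - 1) where
  blocks := B.rightFactorSizes
  blocks_pos := pos_of_mem_rightFactorSizes
  blocks_sum := Nat.eq_sub_of_add_eq B.sum_rightFactorSizes_add_one

section Eval

variable {G : Type*} {op : G → G → G}
  (hA : ∀ x y z u : G, op x (op y (op z u)) = op x (op (op y z) u))
include hA

-- `(node leaf)^[k] R` is the right-associated product `x₁ (x₂ (⋯ (xₖ R)))`.
theorem op_eval_node_eq_op_eval_iterate_node_leaf (Q R : Bracketing) (x : G) (f : ℕ → G)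
    (i : ℕ) :
    op x ((node Q R).eval op f i) = op x (((node leaf)^[Q.size] R).eval op f i) := by
  induction Q generalizing R x i with
  | leaf => rfl
  | node P S ihP ihS =>
    calc
      op x ((node (node P S) R).eval op f i)
      _ = op x ((node P (node S R)).eval op f i) := by
        simp only [eval, size, hA, add_assoc]
      _ = op x ((node P ((node leaf)^[S.size] R)).eval op f i) :=
        congrArg (op x) (ihS R (P.eval op f i) (i + P.size))
      _ = op x (((node leaf)^[P.size] ((node leaf)^[S.size] R)).eval op f i) :=
        ihP _ x i
      _ = op x (((node leaf)^[(node P S).size] R).eval op f i) := by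
        rw [size, Function.iterate_add_apply]

theorem op_eval_eq_op_eval_iterate_node_leaf (Q : Bracketing) (x : G) (f : ℕ → G) (i : ℕ) :
    op x (Q.eval op f i) = op x (((node leaf)^[Q.size - 1] leaf).eval op f i) := by
  induction Q generalizing x i with
  | leaf => rfl
  | node P R _ ihR =>
    calc
      op x ((node P R).eval op f i)
      _ = op x ((node P ((node leaf)^[R.size - 1] leaf)).eval op f i) :=
        congrArg (op x) (ihR (P.eval op f i) (i + P.size))
      _ = op x (((node leaf)^[P.size] ((node leaf)^[R.size - 1] leaf)).eval op f i) :=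
        op_eval_node_eq_op_eval_iterate_node_leaf hA P _ x f i
      _ = op x (((node leaf)^[(node P R).size - 1] leaf).eval op f i) := by
        rw [← Function.iterate_add_apply, size, Nat.add_sub_assoc R.size_pos]

theorem op_eval_congr_size {Q R : Bracketing} (h : Q.size = R.size) (x : G) (f : ℕ → G) (i : ℕ) :
    op x (Q.eval op f i) = op x (R.eval op f i) := by
  rw [op_eval_eq_op_eval_iterate_node_leaf hA Q, h, ← op_eval_eq_op_eval_iterate_node_leaf hA R]

theorem eval_factorsThrough_rightFactorSizes :
    (eval op).FactorsThrough rightFactorSizes := by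
  intro B C h
  induction B generalizing C with
  | leaf =>
    cases C with
    | leaf => rfl
    | node => cases h
  | node P Q ihP _ =>
    cases C with
    | leaf => cases h
    | node P' Q' =>
      obtain ⟨hQ, hP⟩ := List.cons.inj h
      have hsize : P.size = P'.size := by
        rw [← sum_rightFactorSizes_add_one, hP, sum_rightFactorSizes_add_one]
      funext f i
      simp only [eval]
      rw [ihP hP, hsize, op_eval_congr_size hA hQ]

end Eval

end Bracketing

/-- In a groupoid satisfying `x*(y*(z*u)) = x*((y*z)*u)`, the number of distinct
`n`-ary functions induced by bracketings of size `n` is at most `2^(n-2)`: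
the associative spectrum satisfies `s_G(n) ≤ 2^(n-2)` for `n ≥ 2`. -/
theorem spectrum_le_two_pow
    {G : Type*} (op : G → G → G)
    (hA : ∀ x y z u : G, op x (op y (op z u)) = op x (op (op y z) u))
    (n : ℕ) (hn : 2 ≤ n) :
    Set.Finite {F : (Fin n → G) → G | ∃ B : Bracketing, B.size = n ∧
      F = fun v => B.eval op (fun i => v ⟨i % n, Nat.mod_lt i (by omega)⟩) 0} ∧
    Set.ncard {F : (Fin n → G) → G | ∃ B : Bracketing, B.size = n ∧
      F = fun v => B.eval op (fun i => v ⟨i % n, Nat.mod_lt i (by omega)⟩) 0} ≤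
      2 ^ (n - 2) := by
  let toFun (e : (ℕ → G) → ℕ → G) (v : Fin n → G) : G :=
    e (fun i => v ⟨i % n, Nat.mod_lt i (by omega)⟩) 0
  let ofComposition (c : Composition (n - 1)) : (Fin n → G) → G :=
    toFun (Function.extend Bracketing.rightFactorSizes (Bracketing.eval op)
      (fun _ f => f) c.blocks)
  have hsub : {F : (Fin n → G) → G | ∃ B : Bracketing, B.size = n ∧ F = toFun (B.eval op)} ⊆
      Set.range ofComposition := by
    rintro F ⟨B, rfl, rfl⟩
    exact ⟨B.composition, congrArg toFun <|
      (Bracketing.eval_factorsThrough_rightFactorSizes hA).extend_apply _ B⟩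
  have hfin := Set.finite_range ofComposition
  refine ⟨hfin.subset hsub, (Set.ncard_le_ncard hsub hfin).trans ?_⟩
  calc
    (Set.range ofComposition).ncard ≤ Nat.card (Composition (n - 1)) :=
      Finite.card_range_le ofComposition
    _ = 2 ^ (n - 2) := by rw [Nat.card_eq_fintype_card, composition_card, Nat.sub_sub]
end
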